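/- arXiv:0901.0381 — 2 statements merged into one kernel-verified Lean document; each statement's English description precedes it below -/
import Mathlib

section
/- Let Z be the generator of a holomorphic semigroup (e^{tZ})_{t≥0} on a complex Banach space V. Assume there is δ > 0 such that for every λ ∈ ℂ with Re λ > −δ the operator Z − λ : dom Z → V is bijective with bounded inverse. Then the semigroup is bounded, i.e. sup_{t ≥ 0} ‖e^{tZ}‖ < ∞. -/
open Filter Topology Set MeasureTheory

/-- A strongly continuous one-parameter semigroup of bounded operators on `V`. -/
structure C0Semigroup (V : Type*) [NormedAddCommGroup V] [NormedSpace ℂ V] where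
  T : ℝ → V →L[ℂ] V
  map_zero' : T 0 = 1
  map_add' : ∀ s t : ℝ, 0 ≤ s → 0 ≤ t → T (s + t) = (T s).comp (T t)
  strong_continuous : ∀ x : V, ContinuousOn (fun t => T t x) (Set.Ici (0 : ℝ))

/-- `t⁻¹ (T(t)x − x) → y` as `t → 0+`. -/
def genLimit {V : Type*} [NormedAddCommGroup V] [NormedSpace ℂ V]
    (S : C0Semigroup V) (x y : V) : Prop :=
  Filter.Tendsto (fun t : ℝ => (t : ℂ)⁻¹ • (S.T t x - x)) (nhdsWithin 0 (Set.Ioi 0)) (nhds y)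

/-- `Z`, with domain `dom`, is the generator of the semigroup `S`. -/
structure HasGenerator {V : Type*} [NormedAddCommGroup V] [NormedSpace ℂ V]
    (S : C0Semigroup V) (dom : Set V) (Z : V → V) : Prop where
  mem_iff : ∀ x : V, x ∈ dom ↔ ∃ y : V, genLimit S x y
  tendsto : ∀ x ∈ dom, genLimit S x (Z x)

/-- The open sector of angle `θ` around the positive real axis. -/
def sector (θ : ℝ) : Set ℂ := {z : ℂ | z ≠ 0 ∧ |z.arg| < θ}

/-- A strongly continuous semigroup is holomorphic if it extends to an analytic
semigroup on some open sector. -/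
def IsHolomorphicSemigroup {V : Type*} [NormedAddCommGroup V] [NormedSpace ℂ V]
    (S : C0Semigroup V) : Prop :=
  ∃ θ : ℝ, 0 < θ ∧ θ ≤ Real.pi / 2 ∧
    ∃ F : ℂ → V →L[ℂ] V,
      DifferentiableOn ℂ F (sector θ) ∧
      (∀ t : ℝ, 0 < t → F (t : ℂ) = S.T t) ∧
      (∀ z ∈ sector θ, ∀ w ∈ sector θ, F (z + w) = (F z).comp (F w))

/-!
The Gelfand transform turns the semigroup into scalar exponentials. Let `B` be the bicommutant of
the operators `T t`: a closed commutative algebra containing the `T t`, their norm derivatives and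
every resolvent of `Z`. A character `χ` of `B` with `χ (T t) ≠ 0` makes `s ↦ χ (T s)` multiplicative
and differentiable, hence equal to `s ↦ exp (μ s)`, and then `μ` is in the spectrum of `Z`: a
resolvent `R` of `Z` at `μ` satisfies `R (D - μ T t) = T t`, where `D` is the norm derivative of the
semigroup at `t`, while `χ` kills `D - μ T t` but not `T t`.
So every nonzero point of the spectrum of `T 1` is `exp μ` with `μ` in the spectrum of `Z`. If that
spectrum lies in `Re μ < 0`, the spectral radius of `T 1` is less than `1` and the semigroup decays
exponentially.
-/

theorem pow_floor_le_inv_mul_rpow {r : ℝ} (hr : 0 < r) (hr1 : r ≤ 1) (x : ℝ) :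
    r ^ ⌊x⌋₊ ≤ r⁻¹ * r ^ x := by
  rw [← Real.rpow_neg_one, ← Real.rpow_add hr, ← Real.rpow_natCast]
  exact Real.rpow_le_rpow_of_exponent_ge hr hr1 (by linarith [Nat.lt_floor_add_one x])

section BanachAlgebra

variable {A : Type*} [NormedRing A] [NormedAlgebra ℂ A] [CompleteSpace A]

theorem exists_norm_pow_le_mul_pow_of_spectralRadius_lt {a : A} {r : NNReal}
    (h : spectralRadius ℂ a < r) : ∃ C : ℝ, ∀ n : ℕ, ‖a ^ n‖ ≤ C * (r : ℝ) ^ n := by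
  have hr : (r : ℝ) ≠ 0 := by
    intro hr
    simp [NNReal.coe_eq_zero.1 hr] at h
  have hO : (fun n ↦ a ^ n) =O[atTop] (fun n ↦ (r : ℝ) ^ n) := by
    refine Asymptotics.IsBigO.of_bound 1 ?_
    have hlim := spectrum.pow_nnnorm_pow_one_div_tendsto_nhds_spectralRadius a
    filter_upwards [hlim.eventually_lt_const h, eventually_ne_atTop 0] with n hn hn0
    have hle : (‖a ^ n‖₊ : ENNReal) ≤ (r : ENNReal) ^ n := by
      rw [one_div, ENNReal.rpow_inv_lt_iff (by positivity), ENNReal.rpow_natCast] at hn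
      exact hn.le
    rw [one_mul, norm_pow (r : ℝ), NNReal.norm_eq]
    exact_mod_cast hle
  obtain ⟨C, -, hC⟩ := Asymptotics.bound_of_isBigO_nat_atTop hO
  exact ⟨C, fun n ↦ by simpa using hC (pow_ne_zero n hr)⟩

theorem exists_dual_apply_eq_of_mem_spectrum {B : Subalgebra ℂ A} (hclosed : IsClosed (B : Set A))
    (hcomm : ∀ x ∈ B, ∀ y ∈ B, x * y = y * x) {a : A} (ha : a ∈ B) {z : ℂ}
    (hz : z ∈ spectrum ℂ a) :
    ∃ φ : A →L[ℂ] ℂ, (∀ x ∈ B, ∀ y ∈ B, φ (x * y) = φ x * φ y) ∧ φ a = z := by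
  let _ : NormedCommRing B :=
    { (inferInstance : NormedRing B) with
      mul_comm := fun x y ↦ Subtype.ext (hcomm x x.2 y y.2) }
  let _ : NormedAlgebra ℂ B := Subalgebra.toNormedAlgebra B
  have : CompleteSpace B := hclosed.completeSpace_coe
  have hzB : z ∈ spectrum ℂ (⟨a, ha⟩ : B) := spectrum.subset_subalgebra (⟨a, ha⟩ : B) hz
  obtain ⟨χ, hχ⟩ := WeakDual.CharacterSpace.mem_spectrum_iff_exists.1 hzB
  obtain ⟨φ, hφ, -⟩ :=
    exists_extension_norm_eq (Subalgebra.toSubmodule B) (WeakDual.CharacterSpace.toCLM χ)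
  have hφχ : ∀ x : B, φ x = χ x := hφ
  exact ⟨φ, fun x hx y hy ↦ by
    rw [hφχ ⟨x, hx⟩, hφχ ⟨y, hy⟩, ← map_mul, ← hφχ]; rfl, (hφχ ⟨a, ha⟩).trans hχ⟩

end BanachAlgebra

section MultiplicativeFunction

theorem ne_zero_of_map_add_eq_mul {M : Type*} [MulZeroClass M] [NoZeroDivisors M] {f : ℝ → M}
    (hf : ∀ s t, 0 < s → 0 < t → f (s + t) = f s * f t) {s t : ℝ} (ht : 0 < t) (hft : f t ≠ 0)
    (hs : 0 < s) : f s ≠ 0 := by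
  have hmul : ∀ n : ℕ, f ((n + 1) * t) ≠ 0 := by
    intro n
    induction n with
    | zero => simpa using hft
    | succ n ih =>
      rw [Nat.cast_succ, add_one_mul, hf _ _ (by positivity) ht]
      exact mul_ne_zero ih hft
  obtain ⟨n, hn⟩ := exists_nat_gt (s / t)
  have hlt : s < (n + 1) * t := by
    rw [div_lt_iff₀ ht] at hn
    linarith
  have hsplit : f ((n + 1) * t) = f s * f ((n + 1) * t - s) := by
    rw [← hf _ _ hs (sub_pos.2 hlt), add_sub_cancel]
  exact left_ne_zero_of_mul (hsplit ▸ hmul n)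

theorem hasDerivAt_of_map_add_eq_mul {𝕜 : Type*} [NormedField 𝕜] [NormedAlgebra ℝ 𝕜] {f : ℝ → 𝕜}
    (hf : ∀ s t, 0 < s → 0 < t → f (s + t) = f s * f t) {t₀ t : ℝ} {c : 𝕜} (ht₀ : 0 < t₀)
    (h₀ : f t₀ ≠ 0) (hderiv : HasDerivAt f (c * f t₀) t₀) (ht : 0 < t) :
    HasDerivAt f (c * f t) t := by
  have hshift : HasDerivAt (fun s ↦ f (s + (t₀ - t)) * (f t / f t₀)) (c * f t) t := by
    have hd : HasDerivAt f (c * f t₀) (t + (t₀ - t)) := by rwa [add_sub_cancel]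
    exact ((hd.comp_add_const t (t₀ - t)).mul_const (f t / f t₀)).congr_deriv (by field_simp)
  refine hshift.congr_of_eventuallyEq ?_
  filter_upwards [lt_mem_nhds ht, lt_mem_nhds (sub_lt_self t ht₀)] with s hs hst
  have hmul : f s * f t₀ = f (s + (t₀ - t)) * f t := by
    rw [← hf s t₀ hs ht₀, ← hf (s + (t₀ - t)) t (by linarith) ht, add_assoc, sub_add_cancel]
  rw [← mul_div_assoc, ← hmul, mul_div_cancel_right₀ _ h₀]

theorem eq_exp_of_map_add_eq_mul {f : ℝ → ℂ} {μ : ℂ}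
    (hf : ∀ s t, 0 < s → 0 < t → f (s + t) = f s * f t)
    (hderiv : ∀ t, 0 < t → HasDerivAt f (μ * f t) t) {t : ℝ} (ht : 0 < t) (hft : f t ≠ 0) :
    f t = Complex.exp (μ * t) := by
  let g : ℝ → ℂ := fun s ↦ f s * Complex.exp (-μ * s)
  have hg : ∀ s ∈ Ioi (0 : ℝ), HasDerivAt g 0 s := by
    intro s hs
    have hexp : HasDerivAt (fun s : ℝ ↦ Complex.exp (-μ * s)) (Complex.exp (-μ * s) * -μ) s := by
      simpa using (Complex.ofRealCLM.hasDerivAt (x := s)).const_mul (-μ) |>.cexp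
    exact ((hderiv s hs).mul hexp).congr_deriv (by ring)
  have hconst : g (t + t) = g t :=
    isOpen_Ioi.is_const_of_deriv_eq_zero isPreconnected_Ioi
      (fun s hs ↦ (hg s hs).differentiableAt.differentiableWithinAt) (fun s hs ↦ (hg s hs).deriv)
      (mem_Ioi.2 (add_pos ht ht)) ht
  have hgmul : g (t + t) = g t * g t := by
    simp only [g, hf t t ht ht, Complex.ofReal_add, mul_add, Complex.exp_add]
    ring
  have hgt : g t = 1 :=
    mul_left_cancel₀ (mul_ne_zero hft (Complex.exp_ne_zero _)) (by rw [← hgmul, hconst, mul_one])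
  simpa only [g, neg_mul, Complex.exp_neg, ← div_eq_mul_inv,
    div_eq_one_iff_eq (Complex.exp_ne_zero _)] using hgt

end MultiplicativeFunction

section Semigroup

variable {V : Type*} [NormedAddCommGroup V] [NormedSpace ℂ V]

/-- `R` is the bounded inverse `(Z - lam)⁻¹` of the operator `Z - lam` with domain `dom`. -/
def IsResolvent (dom : Set V) (Z : V → V) (lam : ℂ) (R : V →L[ℂ] V) : Prop :=
  (∀ x ∈ dom, R (Z x - lam • x) = x) ∧ ∀ y : V, R y ∈ dom ∧ Z (R y) - lam • R y = y

/-- The resolvent set of the unbounded operator `Z` with domain `dom`; its complement is the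
spectrum of `Z`. -/
def operatorResolventSet (dom : Set V) (Z : V → V) : Set ℂ :=
  {lam | ∃ R : V →L[ℂ] V, IsResolvent dom Z lam R}

namespace C0Semigroup

variable (S : C0Semigroup V)

theorem T_add {s t : ℝ} (hs : 0 ≤ s) (ht : 0 ≤ t) : S.T (s + t) = S.T s * S.T t :=
  S.map_add' s t hs ht

theorem T_natCast_mul {t : ℝ} (ht : 0 ≤ t) (n : ℕ) : S.T (n * t) = S.T t ^ n := by
  induction n with
  | zero => simp [S.map_zero']
  | succ n ih => rw [Nat.cast_succ, add_one_mul, S.T_add (by positivity) ht, ih, pow_succ]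

theorem exists_norm_le_of_mem_Icc [CompleteSpace V] (a : ℝ) :
    ∃ K : ℝ, ∀ t ∈ Icc 0 a, ‖S.T t‖ ≤ K := by
  obtain ⟨K, hK⟩ := banach_steinhaus (g := fun t : Icc 0 a ↦ S.T t) fun x ↦ by
    obtain ⟨C, hC⟩ := isCompact_Icc.exists_bound_of_continuousOn
      ((S.strong_continuous x).mono (Icc_subset_Ici_self : Icc 0 a ⊆ Ici 0))
    exact ⟨C, fun t ↦ hC t t.2⟩
  exact ⟨K, fun t ht ↦ hK ⟨t, ht⟩⟩

/-- Uniform exponential stability: the operator norms `‖T t‖` decay exponentially. -/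
def IsExponentiallyStable : Prop :=
  ∃ M ω : ℝ, 0 < ω ∧ ∀ t, 0 ≤ t → ‖S.T t‖ ≤ M * Real.exp (-(ω * t))

variable {S}

theorem IsExponentiallyStable.exists_norm_le (h : S.IsExponentiallyStable) :
    ∃ M : ℝ, ∀ t : ℝ, 0 ≤ t → ‖S.T t‖ ≤ M := by
  obtain ⟨M, ω, hω, hM⟩ := h
  have hM0 : 0 ≤ M := by simpa using (norm_nonneg _).trans (hM 0 le_rfl)
  exact ⟨M, fun t ht ↦ (hM t ht).trans <| mul_le_of_le_one_right hM0 <|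
    Real.exp_le_one_iff.2 (neg_nonpos.2 (by positivity))⟩

theorem isExponentiallyStable_of_spectralRadius_lt_one [CompleteSpace V] {a : ℝ} (ha : 0 < a)
    (h : spectralRadius ℂ (S.T a) < 1) : S.IsExponentiallyStable := by
  obtain ⟨r, hr, hr1⟩ := ENNReal.lt_iff_exists_nnreal_btwn.1 h
  have hpos : (0 : ℝ) < r := by exact_mod_cast pos_of_gt hr
  have hlt : (r : ℝ) < 1 := by exact_mod_cast hr1
  obtain ⟨C, hC⟩ := exists_norm_pow_le_mul_pow_of_spectralRadius_lt hr
  obtain ⟨K, hK⟩ := S.exists_norm_le_of_mem_Icc a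
  have hC0 : 0 ≤ C := by simpa using (norm_nonneg _).trans (hC 0)
  have hK0 : 0 ≤ K := (norm_nonneg _).trans (hK 0 ⟨le_rfl, ha.le⟩)
  refine ⟨C * (r : ℝ)⁻¹ * K, -Real.log r / a, div_pos (neg_pos.2 (Real.log_neg hpos hlt)) ha,
    fun t ht ↦ ?_⟩
  set n := ⌊t / a⌋₊
  have hn : n * a ≤ t := (le_div_iff₀ ha).1 (Nat.floor_le (by positivity))
  have hn' : t < (n + 1) * a := (div_lt_iff₀ ha).1 (Nat.lt_floor_add_one _)
  have hsplit : S.T t = S.T a ^ n * S.T (t - n * a) := by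
    rw [← S.T_natCast_mul ha.le, ← S.T_add (by positivity) (sub_nonneg.2 hn), add_sub_cancel]
  calc ‖S.T t‖ ≤ ‖S.T a ^ n‖ * ‖S.T (t - n * a)‖ := hsplit ▸ norm_mul_le _ _
    _ ≤ C * (r : ℝ) ^ n * K :=
      mul_le_mul (hC n) (hK _ ⟨by linarith, by linarith⟩) (norm_nonneg _) (by positivity)
    _ ≤ C * ((r : ℝ)⁻¹ * (r : ℝ) ^ (t / a)) * K := by
      gcongr
      exact pow_floor_le_inv_mul_rpow hpos hlt.le _
    _ = C * (r : ℝ)⁻¹ * K * Real.exp (-(-Real.log r / a * t)) := by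
      rw [Real.rpow_def_of_pos hpos]
      ring_nf

variable (S)

/-- The bicommutant of the operators `T t`, `t ≥ 0`: the commutative Banach algebra on whose
characters the semigroup is analysed. -/
def bicommutant : Subalgebra ℂ (V →L[ℂ] V) :=
  Subalgebra.centralizer ℂ (Set.centralizer (S.T '' Ici 0))

theorem isClosed_bicommutant : IsClosed (S.bicommutant : Set (V →L[ℂ] V)) :=
  Set.isClosed_centralizer _

variable {S}

theorem mem_bicommutant_iff {L : V →L[ℂ] V} :
    L ∈ S.bicommutant ↔ ∀ B, (∀ t, 0 ≤ t → Commute B (S.T t)) → Commute B L := by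
  simp only [bicommutant, Subalgebra.mem_centralizer_iff, Set.mem_centralizer_iff, forall_mem_image,
    mem_Ici, commute_iff_eq, eq_comm]

theorem T_mem_bicommutant {t : ℝ} (ht : 0 ≤ t) : S.T t ∈ S.bicommutant :=
  mem_bicommutant_iff.2 fun _ hB ↦ hB t ht

theorem mul_comm_of_mem_bicommutant :
    ∀ K ∈ S.bicommutant, ∀ L ∈ S.bicommutant, K * L = L * K := by
  refine Set.centralizer_centralizer_comm_of_comm ?_
  rintro _ ⟨s, hs, rfl⟩ _ ⟨t, ht, rfl⟩
  rw [← S.T_add hs ht, ← S.T_add ht hs, add_comm]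

theorem mem_bicommutant_of_hasDerivAt {D : V →L[ℂ] V} {t : ℝ} (ht : 0 < t)
    (hD : HasDerivAt S.T D t) : D ∈ S.bicommutant := by
  refine mem_bicommutant_iff.2 fun B hB ↦ (hD.const_mul B).unique ?_
  refine (hD.mul_const B).congr_of_eventuallyEq ?_
  filter_upwards [lt_mem_nhds ht] with s hs using hB s hs.le

theorem genLimit_of_hasDerivAt {D : V →L[ℂ] V} {t : ℝ} (ht : 0 ≤ t) (hD : HasDerivAt S.T D t)
    (x : V) : genLimit S (S.T t x) (D x) := by
  have hslope := ((ContinuousLinearMap.apply ℂ V x).continuous.tendsto D).comp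
    hD.tendsto_slope_zero_right
  refine hslope.congr' ?_
  filter_upwards [self_mem_nhdsWithin] with h hh
  have hTx : S.T (t + h) x = S.T h (S.T t x) := by
    rw [add_comm, S.T_add (mem_Ioi.1 hh).le ht]; rfl
  simp [hTx, ← Complex.ofReal_inv]

end C0Semigroup

theorem genLimit.map_of_commute {S : C0Semigroup V} {x y : V} (h : genLimit S x y) {B : V →L[ℂ] V}
    (hB : ∀ t, 0 ≤ t → Commute B (S.T t)) : genLimit S (B x) (B y) := by
  refine ((B.continuous.tendsto y).comp h).congr' ?_
  filter_upwards [self_mem_nhdsWithin] with t ht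
  have hBT : B (S.T t x) = S.T t (B x) := DFunLike.congr_fun (hB t (mem_Ioi.1 ht).le) x
  simp [hBT]

namespace HasGenerator

variable {S : C0Semigroup V} {dom : Set V} {Z : V → V}

theorem mem_dom_and_eq (hgen : HasGenerator S dom Z) {x y : V} (h : genLimit S x y) :
    x ∈ dom ∧ Z x = y :=
  have hx := (hgen.mem_iff x).2 ⟨y, h⟩
  ⟨hx, tendsto_nhds_unique (hgen.tendsto x hx) h⟩

theorem resolvent_mem_bicommutant (hgen : HasGenerator S dom Z) {lam : ℂ} {R : V →L[ℂ] V}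
    (hR : IsResolvent dom Z lam R) : R ∈ S.bicommutant := by
  refine C0Semigroup.mem_bicommutant_iff.2 fun B hB ↦ ContinuousLinearMap.ext fun y ↦ ?_
  obtain ⟨hRy, hZR⟩ := hR.2 y
  obtain ⟨hBR, hZB⟩ := hgen.mem_dom_and_eq ((hgen.tendsto _ hRy).map_of_commute hB)
  calc B (R y) = R (Z (B (R y)) - lam • B (R y)) := (hR.1 _ hBR).symm
    _ = R (B (Z (R y) - lam • R y)) := by rw [hZB, map_sub B, map_smul B]
    _ = R (B y) := by rw [hZR]

theorem resolvent_mul_deriv_sub_smul (hgen : HasGenerator S dom Z) {lam : ℂ} {R D : V →L[ℂ] V}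
    (hR : IsResolvent dom Z lam R) {t : ℝ} (ht : 0 ≤ t) (hD : HasDerivAt S.T D t) :
    R * (D - lam • S.T t) = S.T t := by
  ext x
  obtain ⟨hdom, hZ⟩ := hgen.mem_dom_and_eq (C0Semigroup.genLimit_of_hasDerivAt ht hD x)
  simpa [hZ] using hR.1 _ hdom

theorem notMem_operatorResolventSet (hgen : HasGenerator S dom Z) {φ : (V →L[ℂ] V) →L[ℂ] ℂ}
    (hφ : ∀ K ∈ S.bicommutant, ∀ L ∈ S.bicommutant, φ (K * L) = φ K * φ L) {t : ℝ} (ht : 0 < t)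
    {D : V →L[ℂ] V} (hD : HasDerivAt S.T D t) (hT : φ (S.T t) ≠ 0) {μ : ℂ}
    (hμ : φ D = μ * φ (S.T t)) : μ ∉ operatorResolventSet dom Z := by
  rintro ⟨R, hR⟩
  have hmem : D - μ • S.T t ∈ S.bicommutant :=
    sub_mem (C0Semigroup.mem_bicommutant_of_hasDerivAt ht hD)
      (S.bicommutant.smul_mem (C0Semigroup.T_mem_bicommutant ht.le) μ)
  apply hT
  calc φ (S.T t) = φ (R * (D - μ • S.T t)) := by
        rw [hgen.resolvent_mul_deriv_sub_smul hR ht.le hD]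
    _ = φ R * φ (D - μ • S.T t) := hφ _ (hgen.resolvent_mem_bicommutant hR) _ hmem
    _ = 0 := by rw [map_sub, map_smul, hμ, smul_eq_mul, sub_self, mul_zero]

theorem spectrum_diff_zero_subset_exp_image [CompleteSpace V] (hgen : HasGenerator S dom Z)
    {t₀ t : ℝ} (ht₀ : 0 < t₀) (hT : DifferentiableAt ℝ S.T t₀) (ht : 0 < t) :
    spectrum ℂ (S.T t) \ {0} ⊆
      (fun μ ↦ Complex.exp (μ * t)) '' (operatorResolventSet dom Z)ᶜ := by
  rintro z ⟨hz, hz0⟩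
  obtain ⟨φ, hφ, rfl⟩ := exists_dual_apply_eq_of_mem_spectrum S.isClosed_bicommutant
    C0Semigroup.mul_comm_of_mem_bicommutant (C0Semigroup.T_mem_bicommutant ht.le) hz
  have hf : ∀ s t, 0 < s → 0 < t → φ (S.T (s + t)) = φ (S.T s) * φ (S.T t) := fun s t hs ht ↦ by
    rw [S.T_add hs.le ht.le, hφ _ (C0Semigroup.T_mem_bicommutant hs.le) _
      (C0Semigroup.T_mem_bicommutant ht.le)]
  have hφT : φ (S.T t) ≠ 0 := hz0
  have h₀ : φ (S.T t₀) ≠ 0 := ne_zero_of_map_add_eq_mul (f := fun s ↦ φ (S.T s)) hf ht hφT ht₀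
  set μ := φ (deriv S.T t₀) / φ (S.T t₀)
  have hμ : φ (deriv S.T t₀) = μ * φ (S.T t₀) := (div_mul_cancel₀ _ h₀).symm
  have hderiv : HasDerivAt (fun s ↦ φ (S.T s)) (μ * φ (S.T t₀)) t₀ :=
    hμ ▸ (φ.restrictScalars ℝ).hasFDerivAt.comp_hasDerivAt t₀ hT.hasDerivAt
  exact ⟨μ, hgen.notMem_operatorResolventSet hφ ht₀ hT.hasDerivAt h₀ hμ,
    (eq_exp_of_map_add_eq_mul hf
      (fun s hs ↦ hasDerivAt_of_map_add_eq_mul hf ht₀ h₀ hderiv hs) ht hφT).symm⟩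

theorem spectralRadius_lt_one [CompleteSpace V] (hgen : HasGenerator S dom Z)
    {t₀ t : ℝ} (ht₀ : 0 < t₀) (hT : DifferentiableAt ℝ S.T t₀)
    (hres : {lam : ℂ | 0 ≤ lam.re} ⊆ operatorResolventSet dom Z) (ht : 0 < t) :
    spectralRadius ℂ (S.T t) < 1 := by
  rcases subsingleton_or_nontrivial V with hV | hV
  · simp
  refine spectrum.spectralRadius_lt_of_forall_lt (r := 1) _ fun z hz ↦ ?_
  rcases eq_or_ne z 0 with rfl | hz0
  · simp
  obtain ⟨μ, hμ, rfl⟩ := hgen.spectrum_diff_zero_subset_exp_image ht₀ hT ht ⟨hz, hz0⟩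
  have hre : μ.re < 0 := not_le.1 fun h ↦ hμ (hres h)
  rw [← NNReal.coe_lt_coe, coe_nnnorm, Complex.norm_exp, NNReal.coe_one, Real.exp_lt_one_iff,
    Complex.re_mul_ofReal]
  exact mul_neg_of_neg_of_pos hre ht

end HasGenerator

theorem sector_mem_nhds {θ : ℝ} (hθ : 0 < θ) {t : ℝ} (ht : 0 < t) : sector θ ∈ 𝓝 (t : ℂ) := by
  have hcont : ContinuousAt (fun z : ℂ ↦ |z.arg|) t :=
    (Complex.continuousAt_arg (Complex.ofReal_mem_slitPlane.2 ht)).abs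
  have harg : |(t : ℂ).arg| < θ := by rwa [Complex.arg_ofReal_of_nonneg ht.le, abs_zero]
  have hne : (t : ℂ) ≠ 0 := Complex.ofReal_ne_zero.2 ht.ne'
  filter_upwards [isOpen_ne.mem_nhds hne, hcont.eventually_lt_const harg] with z hz hz'
  exact ⟨hz, hz'⟩

theorem IsHolomorphicSemigroup.differentiableAt {S : C0Semigroup V}
    (hhol : IsHolomorphicSemigroup S) {t : ℝ} (ht : 0 < t) : DifferentiableAt ℝ S.T t := by
  obtain ⟨θ, hθ, -, F, hF, hFT, -⟩ := hhol
  have hFt : DifferentiableAt ℝ (fun s : ℝ ↦ F s) t :=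
    ((hF.differentiableAt (sector_mem_nhds hθ ht)).restrictScalars ℝ).comp t
      Complex.ofRealCLM.differentiableAt
  refine hFt.congr_of_eventuallyEq ?_
  filter_upwards [lt_mem_nhds ht] with s hs using (hFT s hs).symm

theorem stmt1_general [CompleteSpace V] (S : C0Semigroup V) (dom : Set V) (Z : V → V)
    (hgen : HasGenerator S dom Z) (hdiff : ∃ t₀ : ℝ, 0 < t₀ ∧ DifferentiableAt ℝ S.T t₀)
    (hres : {lam : ℂ | 0 ≤ lam.re} ⊆ operatorResolventSet dom Z) : S.IsExponentiallyStable := by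
  obtain ⟨t₀, ht₀, hT⟩ := hdiff
  exact C0Semigroup.isExponentiallyStable_of_spectralRadius_lt_one one_pos
    (hgen.spectralRadius_lt_one ht₀ hT hres one_pos)

end Semigroup

/-- If the generator `Z` of a holomorphic semigroup has bounded
resolvents on a half plane `Re λ > −δ` for some `δ > 0`, then the semigroup is bounded. -/
theorem stmt1 {V : Type*} [NormedAddCommGroup V] [NormedSpace ℂ V] [CompleteSpace V]
    (S : C0Semigroup V) (dom : Set V) (Z : V → V)
    (hgen : HasGenerator S dom Z)
    (hhol : IsHolomorphicSemigroup S)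
    (hres : ∃ δ : ℝ, 0 < δ ∧ ∀ lam : ℂ, -δ < lam.re →
      ∃ R : V →L[ℂ] V, (∀ x ∈ dom, R (Z x - lam • x) = x) ∧
        ∀ y : V, R y ∈ dom ∧ Z (R y) - lam • R y = y) :
    ∃ M : ℝ, ∀ t : ℝ, 0 ≤ t → ‖S.T t‖ ≤ M := by
  obtain ⟨δ, hδ, hR⟩ := hres
  exact (stmt1_general S dom Z hgen ⟨1, one_pos, hhol.differentiableAt one_pos⟩
    fun lam hlam ↦ hR lam (neg_neg_iff_pos.2 hδ |>.trans_le hlam)).exists_norm_le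
end

section
/- Let Z be the generator of a holomorphic semigroup (e^{tZ})_{t≥0} on a complex Banach space V. Let ε > 0 and let (B(r))_{r∈[−ε,ε]} be a family of closed operators on V with B(0) = 0 such that: (i) for every t > 0 and r ∈ [−ε,ε] the operator B(r) e^{tZ} is everywhere defined and bounded and depends continuously on r in operator norm; (ii) for every t > 0 the derivative (d/dr)(B(r) e^{tZ})|_{r=0} exists in operator norm; (iii) there is C > 0 such that ‖r⁻¹ B(r) e^{tZ}‖ ≤ C t^{−1/2} for all r ∈ [−ε,ε] ∖ {0} and 0 < t < 1; (iv) the set of f ∈ dom Z such that B(r) e^{tZ} f ∈ dom Z for all t ≥ 0 and all r ∈ [−ε,ε] is dense in V. For each r let e^{t(Z+B(r))} denote the holomorphic semigroup generated by Z + B(r) with domain dom Z. Then for every t ≥ 0 the map r ↦ e^{t(Z+B(r))} is differentiable in operator norm at r = 0, and (d/dr) e^{t(Z+B(r))}|_{r=0} = ∫₀ᵗ e^{sZ} · (d/dr)(B(r) e^{(t−s)Z})|_{r=0} ds, the integral converging in operator norm. -/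
open Filter Topology Set MeasureTheory

/-!
Write `S(t) = e^{tZ}` and `R_r(t) = e^{t(Z + B(r))}`. Since `S(u)` maps into `dom Z` for `u > 0`,
the curve `u ↦ R_r(t - u) S(u) x` is differentiable and Duhamel's formula
`R_r(t) x - S(t) x = ∫₀ᵗ R_r(t - u) B(r) S(u) x du` holds. Hence `R_r - S = O(r)` uniformly on
`[0, t]`, and replacing `R_r` by `S` in the integral costs `O(r²)`:
`R_r(t) = S(t) + ∫₀ᵗ S(t - u) B(r) S(u) du + O(r²)`.
The remaining integral is differentiated in `r` by dominated convergence in operator norm.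
-/

open scoped Interval

section IntervalIntegral

lemma intervalIntegrable_div_sqrt (C : ℝ) {b : ℝ} (hb : 0 ≤ b) :
    IntervalIntegrable (fun t => C / √t) volume 0 b := by
  have hrpow : IntervalIntegrable (fun t : ℝ => C * t ^ (-(1 / 2) : ℝ)) volume 0 b :=
    (intervalIntegral.intervalIntegrable_rpow' (by norm_num)).const_mul C
  refine hrpow.congr_uIoo fun t ht => ?_
  rw [uIoo_of_le hb] at ht
  simp only [Real.rpow_neg ht.1.le, Real.sqrt_eq_rpow, div_eq_mul_inv]

variable {E : Type*} [NormedAddCommGroup E]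

lemma intervalIntegrable_comp_inv_one_add_mul {w : ℝ → E} (hw : IntervalIntegrable w volume 0 1)
    {t : ℝ} (ht : 0 ≤ t) : IntervalIntegrable (fun u => w ((1 + t)⁻¹ * u)) volume 0 t := by
  have hscaled : IntervalIntegrable (fun u => w ((1 + t)⁻¹ * u)) volume 0 (1 + t) := by
    simpa using hw.comp_mul_left (c := (1 + t)⁻¹)
  exact hscaled.mono_set (by grind [uIcc_of_le])

lemma intervalIntegrable_of_continuousOn_of_norm_le {f : ℝ → E} {φ : ℝ → ℝ} {a b : ℝ}
    (hab : a ≤ b) (hf : ContinuousOn f (Ioo a b)) (hφ : IntervalIntegrable φ volume a b)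
    (hfφ : ∀ s ∈ Ioo a b, ‖f s‖ ≤ φ s) : IntervalIntegrable f volume a b := by
  rw [intervalIntegrable_iff_integrableOn_Ioo_of_le hab] at hφ ⊢
  exact hφ.mono' (hf.aestronglyMeasurable measurableSet_Ioo)
    (ae_restrict_of_forall_mem measurableSet_Ioo hfφ)

lemma norm_slope_le [NormedSpace ℝ E] {f : ℝ → E} {r₀ r C : ℝ} (hr : r ≠ r₀)
    (h : ‖f r - f r₀‖ ≤ C * |r - r₀|) : ‖slope f r₀ r‖ ≤ C := by
  rwa [slope_def_module, norm_smul, norm_inv, Real.norm_eq_abs,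
    inv_mul_le_iff₀ (abs_pos.2 (sub_ne_zero.2 hr)), mul_comm]

lemma norm_le_of_hasDerivAt [NormedSpace ℝ E] {f : ℝ → E} {f' : E} {I : Set ℝ} (hI : I ∈ 𝓝 0)
    {C : ℝ} (hf : HasDerivAt f f' 0) (hC : ∀ r ∈ I, ‖f r‖ ≤ |r| * C) : ‖f'‖ ≤ C := by
  have hf0 : f 0 = 0 := by simpa using hC 0 (mem_of_mem_nhds hI)
  refine le_of_tendsto hf.tendsto_slope.norm ?_
  filter_upwards [nhdsWithin_le_nhds hI, self_mem_nhdsWithin] with r hr hr0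
  exact norm_slope_le hr0 (by simpa [hf0, mul_comm] using hC r hr)

lemma hasDerivAt_intervalIntegral_of_norm_sub_le [NormedSpace ℝ E]
    {F : ℝ → ℝ → E} {F' : ℝ → E} {bound : ℝ → ℝ} {a b r₀ : ℝ} {I : Set ℝ} (hI : I ∈ 𝓝 r₀)
    (hF : ∀ r ∈ I, IntervalIntegrable (F r) volume a b)
    (hlip : ∀ u ∈ Ι a b, ∀ r ∈ I, ‖F r u - F r₀ u‖ ≤ bound u * |r - r₀|)
    (hbound : IntervalIntegrable bound volume a b)
    (hdiff : ∀ u ∈ Ι a b, HasDerivAt (F · u) (F' u) r₀) :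
    HasDerivAt (fun r => ∫ u in a..b, F r u) (∫ u in a..b, F' u) r₀ := by
  have hr₀ : r₀ ∈ I := mem_of_mem_nhds hI
  have hI' : ∀ᶠ r in 𝓝[≠] r₀, r ∈ I := nhdsWithin_le_nhds hI
  have hslope : ∀ r ∈ I, IntervalIntegrable (fun u => slope (F · u) r₀ r) volume a b :=
    fun r hr => ((hF r hr).sub (hF r₀ hr₀)).smul (r - r₀)⁻¹
  rw [hasDerivAt_iff_tendsto_slope]
  refine (intervalIntegral.tendsto_integral_filter_of_dominated_convergence bound
    (hI'.mono fun r hr => (hslope r hr).def'.aestronglyMeasurable) ?_ hbound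
    (.of_forall fun u hu => (hdiff u hu).tendsto_slope)).congr' ?_
  · filter_upwards [hI', self_mem_nhdsWithin] with r hr hne
    exact .of_forall fun u hu => norm_slope_le hne (hlip u hu r hr)
  · filter_upwards [hI'] with r hr
    simp only [slope_def_module]
    rw [intervalIntegral.integral_smul, intervalIntegral.integral_sub (hF r hr) (hF r₀ hr₀)]

end IntervalIntegral

namespace C0Semigroup

variable {V : Type*} [NormedAddCommGroup V] [NormedSpace ℂ V]

lemma apply_add (S : C0Semigroup V) {s t : ℝ} (hs : 0 ≤ s) (ht : 0 ≤ t) (x : V) :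
    S.T (s + t) x = S.T s (S.T t x) := by
  rw [S.map_add' s t hs ht, ContinuousLinearMap.comp_apply]

lemma genLimit_iff_hasDerivWithinAt (S : C0Semigroup V) {x y : V} :
    genLimit S x y ↔ HasDerivWithinAt (fun t => S.T t x) y (Ioi 0) 0 := by
  rw [hasDerivWithinAt_iff_tendsto_slope' self_notMem_Ioi, genLimit]
  congr! 2 with t
  rw [slope_def_module, S.map_zero', sub_zero, ← Complex.ofReal_inv, Complex.coe_smul,
    one_apply_eq_self]

lemma genLimit_unique {S : C0Semigroup V} {x y z : V} (hy : genLimit S x y)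
    (hz : genLimit S x z) : y = z :=
  tendsto_nhds_unique hy hz

lemma genLimit_apply_of_hasDerivAt (S : C0Semigroup V) {t : ℝ} (ht : 0 ≤ t) {x y : V}
    (h : HasDerivAt (fun u => S.T u x) y t) : genLimit S (S.T t x) y := by
  rw [genLimit_iff_hasDerivWithinAt]
  have hshift : HasDerivAt (fun u => S.T (u + t) x) y 0 :=
    HasDerivAt.comp_add_const 0 t (by rwa [zero_add])
  refine hshift.hasDerivWithinAt.congr (fun u hu => ?_) (by simp [S.map_zero'])
  rw [← S.apply_add (le_of_lt hu) ht]

lemma apply_slope_zero_sub (S : C0Semigroup V) {a b : ℝ} (ha : 0 ≤ a) (hab : a ≤ b) (x : V) :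
    S.T a (slope (fun t => S.T t x) 0 (b - a)) = slope (fun t => S.T t x) a b := by
  rw [slope_def_module, slope_def_module, ContinuousLinearMap.map_smul_of_tower, map_sub,
    ← S.apply_add ha (sub_nonneg.2 hab), ← S.apply_add ha le_rfl, add_sub_cancel, add_zero,
    sub_zero]

variable [CompleteSpace V]

lemma exists_norm_le (S : C0Semigroup V) (t : ℝ) : ∃ M : ℝ, ∀ s ∈ Icc 0 t, ‖S.T s‖ ≤ M := by
  obtain ⟨M, hM⟩ := banach_steinhaus (g := fun s : Icc (0 : ℝ) t => S.T s) fun x => by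
    obtain ⟨C, hC⟩ := isCompact_Icc.exists_bound_of_continuousOn
      ((S.strong_continuous x).mono (Icc_subset_Ici_self : Icc 0 t ⊆ _))
    exact ⟨C, fun s => hC s s.2⟩
  exact ⟨M, fun s hs => hM ⟨s, hs⟩⟩

lemma continuousOn_apply (S : C0Semigroup V) :
    ContinuousOn (fun p : ℝ × V => S.T p.1 p.2) (Ici 0 ×ˢ univ) := by
  rintro ⟨t, x⟩ ⟨ht, -⟩
  obtain ⟨M, hM⟩ := S.exists_norm_le (t + 1)
  have hM' : ∀ s ∈ Icc 0 (t + 1), ‖S.T s‖₊ ≤ M.toNNReal := fun s hs =>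
    NNReal.le_toNNReal_of_coe_le (hM s hs)
  have hcont : ContinuousOn (fun p : ℝ × V => S.T p.1 p.2) (Icc 0 (t + 1) ×ˢ univ) :=
    continuousOn_prod_of_continuousOn_lipschitzOnWith' _ M.toNNReal
      (fun s hs => ((S.T s).lipschitz.weaken (hM' s hs)).lipschitzOnWith)
      (fun y _ => (S.strong_continuous y).mono Icc_subset_Ici_self)
  have ht1 : t < t + 1 := lt_add_one t
  refine (hcont (t, x) ⟨⟨ht, ht1.le⟩, mem_univ x⟩).mono_of_mem_nhdsWithin ?_
  rw [nhdsWithin_prod_eq]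
  refine prod_mem_prod ?_ univ_mem
  rw [← Ici_inter_Iic]
  exact inter_mem_nhdsWithin _ (Iic_mem_nhds ht1)

lemma tendsto_apply (S : C0Semigroup V) {ι : Type*} {l : Filter ι} {τ : ι → ℝ} {y : ι → V}
    {t : ℝ} {x : V} (ht : 0 ≤ t) (hτ : Tendsto τ l (𝓝 t)) (hτ0 : ∀ᶠ i in l, 0 ≤ τ i)
    (hy : Tendsto y l (𝓝 x)) : Tendsto (fun i => S.T (τ i) (y i)) l (𝓝 (S.T t x)) :=
  (S.continuousOn_apply (t, x) ⟨ht, mem_univ x⟩).tendsto.comp <|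
    tendsto_nhdsWithin_iff.2 ⟨hτ.prodMk_nhds hy, hτ0.mono fun _ h => ⟨h, mem_univ _⟩⟩

lemma hasDerivAt_apply_of_genLimit (S : C0Semigroup V) {t : ℝ} (ht : 0 < t) {x y : V}
    (h : genLimit S x y) : HasDerivAt (fun u => S.T u x) (S.T t y) t := by
  rw [genLimit_iff_hasDerivWithinAt, hasDerivWithinAt_iff_tendsto_slope' self_notMem_Ioi] at h
  rw [hasDerivAt_iff_tendsto_slope]
  have habs : Tendsto (fun u => |u - t|) (𝓝[≠] t) (𝓝[>] 0) := by
    refine tendsto_nhdsWithin_iff.2 ⟨tendsto_nhdsWithin_of_tendsto_nhds ?_, ?_⟩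
    · simpa using (show Continuous fun u : ℝ => |u - t| by fun_prop).tendsto t
    · filter_upwards [self_mem_nhdsWithin] with u hu using abs_pos.2 (sub_ne_zero.2 hu)
  have hmin : Tendsto (fun u => min u t) (𝓝[≠] t) (𝓝 t) :=
    tendsto_nhdsWithin_of_tendsto_nhds <| by
      simpa using (show Continuous fun u : ℝ => min u t by fun_prop).tendsto t
  have hpos : ∀ᶠ u in 𝓝[≠] t, 0 < u := nhdsWithin_le_nhds (Ioi_mem_nhds ht)
  refine (S.tendsto_apply ht.le hmin (hpos.mono fun u hu => (lt_min hu ht).le)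
    (h.comp habs)).congr' ?_
  filter_upwards [hpos] with u hu
  rcases le_total u t with hut | htu
  · rw [Function.comp_apply, min_eq_left hut, abs_sub_comm, abs_of_nonneg (sub_nonneg.2 hut),
      S.apply_slope_zero_sub hu.le hut, slope_comm]
  · rw [Function.comp_apply, min_eq_right htu, abs_of_nonneg (sub_nonneg.2 htu),
      S.apply_slope_zero_sub ht.le htu]

lemma hasDerivAt_apply_of_genLimit_apply (S : C0Semigroup V) {s t : ℝ} (hs : 0 ≤ s) (hst : s < t)
    {x z : V} (hz : genLimit S (S.T s x) z) :
    HasDerivAt (fun u => S.T u x) (S.T (t - s) z) t := by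
  refine ((S.hasDerivAt_apply_of_genLimit (sub_pos.2 hst) hz).comp_sub_const t s)
    |>.congr_of_eventuallyEq ?_
  filter_upwards [Ioi_mem_nhds hst] with u hu
  rw [← S.apply_add (sub_nonneg.2 (le_of_lt hu)) hs, sub_add_cancel]

lemma hasDerivAt_sub_apply (S : C0Semigroup V) {t u : ℝ} (hut : u < t) {f : ℝ → V} {f' z : V}
    (hf : HasDerivAt f f' u) (hz : genLimit S (f u) z) :
    HasDerivAt (fun v => S.T (t - v) (f v)) (S.T (t - u) (f' - z)) u := by
  have horbit : HasDerivAt (fun v => S.T (t - v) (f u)) (-S.T (t - u) z) u :=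
    (S.hasDerivAt_apply_of_genLimit (sub_pos.2 hut) hz).comp_const_sub t u
  rw [hasDerivAt_iff_tendsto_slope] at hf horbit ⊢
  have htime : Tendsto (fun v => t - v) (𝓝[≠] u) (𝓝 (t - u)) :=
    tendsto_nhdsWithin_of_tendsto_nhds ((continuous_sub_left t).tendsto u)
  have hpos : ∀ᶠ v in 𝓝[≠] u, 0 ≤ t - v :=
    nhdsWithin_le_nhds ((eventually_le_nhds hut).mono fun _ hv => sub_nonneg.2 hv)
  rw [map_sub, sub_eq_add_neg]
  refine ((S.tendsto_apply (sub_pos.2 hut).le htime hpos hf).add horbit).congr fun v => ?_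
  simp only [slope_def_module, ContinuousLinearMap.map_smul_of_tower, map_sub, ← smul_add]
  rw [sub_add_sub_cancel]

/-- An immediately differentiable semigroup: `e^{tZ}` maps `V` into `dom Z` for every `t > 0`. -/
def IsImmediatelyDifferentiable (S : C0Semigroup V) : Prop :=
  ∀ t, 0 < t → ∀ x, ∃ y, genLimit S (S.T t x) y

namespace IsImmediatelyDifferentiable

variable {S : C0Semigroup V}

lemma hasDerivAt_apply (hS : S.IsImmediatelyDifferentiable) {t : ℝ} (ht : 0 < t) {x y : V}
    (hy : genLimit S (S.T t x) y) : HasDerivAt (fun u => S.T u x) y t := by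
  obtain ⟨z, hz⟩ := hS (t / 2) (half_pos ht) x
  have horbit := S.hasDerivAt_apply_of_genLimit_apply (half_pos ht).le (half_lt_self ht) hz
  rwa [genLimit_unique hy (S.genLimit_apply_of_hasDerivAt ht.le horbit)]

lemma exists_clm_genLimit (hS : S.IsImmediatelyDifferentiable) {t : ℝ} (ht : 0 < t) :
    ∃ A : V →L[ℂ] V, ∀ x, genLimit S (S.T t x) (A x) := by
  choose A hA using hS t ht
  exact ⟨continuousLinearMapOfTendsto
    (fun h : ℝ => (h : ℂ)⁻¹ • ((S.T h).comp (S.T t) - S.T t)) (tendsto_pi_nhds.2 hA), hA⟩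

lemma continuousOn_T (hS : S.IsImmediatelyDifferentiable) : ContinuousOn S.T (Ioi 0) := by
  intro t (ht : 0 < t)
  obtain ⟨A, hA⟩ := hS.exists_clm_genLimit (half_pos ht)
  obtain ⟨M, hM⟩ := S.exists_norm_le (2 * t)
  have hbound : ∀ u ∈ Ioo (t / 2) (2 * t), ∀ x, ‖S.T (u - t / 2) (A x)‖ ≤ M * ‖A‖ * ‖x‖ :=
    fun u hu x => by
      rw [mul_assoc]
      exact (S.T _).le_of_opNorm_le_of_le (hM _ ⟨by linarith [hu.1], by linarith [hu.2]⟩)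
        (A.le_opNorm x)
  have hlip : ∀ u ∈ Ioo (t / 2) (2 * t), ‖S.T u - S.T t‖ ≤ M * ‖A‖ * |u - t| := fun u hu => by
    have hM0 : 0 ≤ M := (norm_nonneg _).trans (hM t ⟨ht.le, by linarith⟩)
    refine ContinuousLinearMap.opNorm_le_bound _ (by positivity) fun x => ?_
    rw [mul_right_comm]
    exact (convex_Ioo _ _).norm_image_sub_le_of_norm_hasDerivWithin_le
      (fun v hv => (S.hasDerivAt_apply_of_genLimit_apply (half_pos ht).le hv.1
        (hA x)).hasDerivWithinAt)
      (fun v hv => hbound v hv x) ⟨half_lt_self ht, by linarith⟩ hu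
  refine ContinuousAt.continuousWithinAt (tendsto_iff_norm_sub_tendsto_zero.2 ?_)
  refine squeeze_zero' (.of_forall fun _ => norm_nonneg _)
    (mem_of_superset (Ioo_mem_nhds (half_lt_self ht) (by linarith)) hlip) ?_
  simpa using (show Continuous fun u : ℝ => M * ‖A‖ * |u - t| by fun_prop).tendsto t

lemma continuousOn_of_map_add (hS : S.IsImmediatelyDifferentiable) {g : ℝ → V →L[ℂ] V}
    (hg : ∀ u > 0, ∀ v ≥ 0, g (u + v) = (g u).comp (S.T v)) : ContinuousOn g (Ioi 0) := by
  intro u (hu : 0 < u)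
  have hT : ContinuousAt (fun v => S.T (v - u / 2)) u :=
    (hS.continuousOn_T.continuousAt (Ioi_mem_nhds (by linarith))).comp
      (f := fun v : ℝ => v - u / 2) (by fun_prop)
  refine ((continuousAt_const (y := g (u / 2))).clm_comp hT).congr ?_ |>.continuousWithinAt
  filter_upwards [Ioi_mem_nhds (half_lt_self hu)] with v hv
  rw [← hg _ (half_pos hu) _ (sub_nonneg.2 (le_of_lt hv)), add_sub_cancel]

lemma continuousOn_sub (hS : S.IsImmediatelyDifferentiable) (t : ℝ) :
    ContinuousOn (fun u => S.T (t - u)) (Iio t) :=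
  hS.continuousOn_T.comp (by fun_prop) fun _ hu => sub_pos.2 (mem_Iio.1 hu)

end IsImmediatelyDifferentiable

end C0Semigroup

lemma sector_mem_nhds_ofReal {θ t : ℝ} (hθ : 0 < θ) (ht : 0 < t) : sector θ ∈ 𝓝 (t : ℂ) := by
  have harg : ContinuousAt (fun z : ℂ => |z.arg|) t :=
    (Complex.continuousAt_arg (Complex.ofReal_mem_slitPlane.2 ht)).abs
  have hlt : ∀ᶠ z : ℂ in 𝓝 (t : ℂ), |z.arg| < θ :=
    harg.eventually_lt_const (by simpa [Complex.arg_ofReal_of_nonneg ht.le] using hθ)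
  have hne : ∀ᶠ z : ℂ in 𝓝 (t : ℂ), z ≠ 0 := eventually_ne_nhds (mod_cast ht.ne')
  exact hne.and hlt

lemma IsHolomorphicSemigroup.isImmediatelyDifferentiable {V : Type*} [NormedAddCommGroup V]
    [NormedSpace ℂ V] {S : C0Semigroup V} (hS : IsHolomorphicSemigroup S) :
    S.IsImmediatelyDifferentiable := by
  obtain ⟨θ, hθ, -, F, hF, hFS, -⟩ := hS
  intro t ht x
  have hderiv : HasDerivAt (fun u : ℝ => F u x) (deriv F t x) t := by
    simpa [Function.comp_def] using HasDerivAt.scomp t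
      ((hF.differentiableAt (sector_mem_nhds_ofReal hθ ht)).hasDerivAt.clm_apply
        (hasDerivAt_const (t : ℂ) x)) Complex.ofRealCLM.hasDerivAt
  refine ⟨deriv F t x, S.genLimit_apply_of_hasDerivAt ht.le (hderiv.congr_of_eventuallyEq ?_)⟩
  filter_upwards [Ioi_mem_nhds ht] with u hu
  rw [hFS u hu]

namespace C0Semigroup

variable {V : Type*} [NormedAddCommGroup V] [NormedSpace ℂ V]

/-- `IsPerturbation R S g`: if `Z` generates `S`, then on the ranges of `e^{uZ}`, `u > 0`, the
generator of `R` is `Z + B`, where the bounded operator `g u` stands for `B e^{uZ}`. -/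
def IsPerturbation (R S : C0Semigroup V) (g : ℝ → V →L[ℂ] V) : Prop :=
  ∀ ⦃u⦄, 0 < u → ∀ ⦃x y⦄, genLimit S (S.T u x) y → genLimit R (S.T u x) (y + g u x)

lemma map_add_of_hasDerivAt {S : C0Semigroup V} {I : Set ℝ} (hI : I ∈ 𝓝 0)
    {G : ℝ → ℝ → V →L[ℂ] V} {g' : ℝ → V →L[ℂ] V} (hg' : ∀ u > 0, HasDerivAt (G · u) (g' u) 0)
    (hG : ∀ r ∈ I, ∀ u > 0, ∀ v ≥ 0, G r (u + v) = (G r u).comp (S.T v)) {u v : ℝ}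
    (hu : 0 < u) (hv : 0 ≤ v) : g' (u + v) = (g' u).comp (S.T v) := by
  have hcomp : HasDerivAt (fun r => (G r u).comp (S.T v)) ((g' u).comp (S.T v)) 0 :=
    (((ContinuousLinearMap.compL ℂ V V V).flip (S.T v)).restrictScalars
      ℝ).hasFDerivAt.comp_hasDerivAt 0 (hg' u hu)
  refine (hg' (u + v) (by positivity)).unique (hcomp.congr_of_eventuallyEq ?_)
  filter_upwards [hI] with r hr using hG r hr u hu v hv

lemma isPerturbation_of_hasGenerator {R S : C0Semigroup V} {dom : Set V} {Z B : V → V}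
    {g : ℝ → V →L[ℂ] V} (hS : HasGenerator S dom Z)
    (hR : HasGenerator R dom (fun x => Z x + B x)) (hg : ∀ u > 0, ∀ x, g u x = B (S.T u x)) :
    IsPerturbation R S g := by
  intro u hu x y hy
  have hdom : S.T u x ∈ dom := (hS.mem_iff _).2 ⟨y, hy⟩
  rw [hg u hu, genLimit_unique hy (hS.tendsto _ hdom)]
  exact hR.tendsto _ hdom

-- The splitting `g u = g δ ∘ S(u - δ)` with `δ = u / (1 + t) < 1` carries the bound from
-- `(0, 1)` to `(0, t]`.
lemma norm_le_mul_of_map_add {S : C0Semigroup V} {g : ℝ → V →L[ℂ] V} {t M : ℝ} {w : ℝ → ℝ}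
    (hg : ∀ u > 0, ∀ v ≥ 0, g (u + v) = (g u).comp (S.T v)) (hM : ∀ s ∈ Icc 0 t, ‖S.T s‖ ≤ M)
    (hw : ∀ u ∈ Ioo 0 1, ‖g u‖ ≤ w u) {u : ℝ} (hu : u ∈ Ioc 0 t) :
    ‖g u‖ ≤ w ((1 + t)⁻¹ * u) * M := by
  obtain ⟨hu0, hut⟩ := hu
  have ht1 : 0 < 1 + t := by linarith
  have hlt : (1 + t)⁻¹ * u < 1 := by rw [inv_mul_lt_one₀ ht1]; linarith
  have hle : (1 + t)⁻¹ * u ≤ u :=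
    mul_le_of_le_one_left hu0.le (inv_le_one_of_one_le₀ (by linarith))
  have hpos : 0 < (1 + t)⁻¹ * u := by positivity
  have hwu : ‖g ((1 + t)⁻¹ * u)‖ ≤ w ((1 + t)⁻¹ * u) := hw _ ⟨hpos, hlt⟩
  have hMu : ‖S.T (u - (1 + t)⁻¹ * u)‖ ≤ M := hM _ ⟨sub_nonneg.2 hle, by linarith⟩
  calc ‖g u‖ = ‖(g ((1 + t)⁻¹ * u)).comp (S.T (u - (1 + t)⁻¹ * u))‖ := by
        rw [← hg _ hpos _ (sub_nonneg.2 hle), add_sub_cancel]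
    _ ≤ _ := (ContinuousLinearMap.opNorm_comp_le _ _).trans
        (mul_le_mul hwu hMu (norm_nonneg _) ((norm_nonneg _).trans hwu))

lemma IsPerturbation.map_add {R S : C0Semigroup V} {g : ℝ → V →L[ℂ] V} (hR : IsPerturbation R S g)
    (hS : S.IsImmediatelyDifferentiable) {u v : ℝ} (hu : 0 < u) (hv : 0 ≤ v) :
    g (u + v) = (g u).comp (S.T v) := by
  ext x
  obtain ⟨y, hy⟩ := hS (u + v) (by positivity) x
  have hRy := hR (by positivity) hy
  rw [S.apply_add hu.le hv] at hy hRy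
  exact add_left_cancel (genLimit_unique hRy (hR hu hy))

lemma norm_integral_sub_apply_le {A g : ℝ → V →L[ℂ] V} {t c : ℝ} {w : ℝ → ℝ} (ht : 0 ≤ t)
    (hA : ∀ s ∈ Icc 0 t, ‖A s‖ ≤ c) (hw : IntervalIntegrable w volume 0 t)
    (hgw : ∀ u ∈ Ioc 0 t, ‖g u‖ ≤ w u) (x : V) :
    ‖∫ u in 0..t, A (t - u) (g u x)‖ ≤ c * (∫ u in 0..t, w u) * ‖x‖ := by
  rw [mul_assoc, ← intervalIntegral.integral_mul_const, ← intervalIntegral.integral_const_mul]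
  refine intervalIntegral.norm_integral_le_of_norm_le ht (.of_forall fun u hu => ?_)
    ((hw.mul_const ‖x‖).const_mul c)
  exact (A _).le_of_opNorm_le_of_le (hA _ ⟨sub_nonneg.2 hu.2, by linarith [hu.1]⟩)
    ((g u).le_of_opNorm_le (hgw u hu) x)

variable [CompleteSpace V]

section Convolution

variable {t : ℝ} {g : ℝ → V →L[ℂ] V} {w : ℝ → ℝ} (ht : 0 ≤ t) (hg : ContinuousOn g (Ioi 0))
  (hw : IntervalIntegrable w volume 0 t) (hgw : ∀ u ∈ Ioc 0 t, ‖g u‖ ≤ w u)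

include ht hg hw hgw

lemma intervalIntegrable_sub_apply (R : C0Semigroup V) (x : V) :
    IntervalIntegrable (fun u => R.T (t - u) (g u x)) volume 0 t := by
  obtain ⟨m, hm⟩ := R.exists_norm_le t
  refine intervalIntegrable_of_continuousOn_of_norm_le ht ?_ ((hw.mul_const ‖x‖).const_mul m)
    fun u hu => ?_
  · refine R.continuousOn_apply.comp (f := fun u => (t - u, g u x)) ?_
      fun u hu => ⟨sub_nonneg.2 hu.2.le, mem_univ _⟩
    exact (continuousOn_const.sub continuousOn_id).prodMk
      ((hg.mono Ioo_subset_Ioi_self).clm_apply continuousOn_const)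
  · exact (R.T _).le_of_opNorm_le_of_le (hm _ ⟨sub_nonneg.2 hu.2.le, by linarith [hu.1]⟩)
      ((g u).le_of_opNorm_le (hgw u ⟨hu.1, hu.2.le⟩) x)

lemma IsImmediatelyDifferentiable.intervalIntegrable_sub_comp {S : C0Semigroup V}
    (hS : S.IsImmediatelyDifferentiable) :
    IntervalIntegrable (fun u => (S.T (t - u)).comp (g u)) volume 0 t := by
  obtain ⟨m, hm⟩ := S.exists_norm_le t
  refine intervalIntegrable_of_continuousOn_of_norm_le ht ?_ (hw.const_mul m) fun u hu => ?_
  · exact ((hS.continuousOn_sub t).mono Ioo_subset_Iio_self).clm_comp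
      (hg.mono Ioo_subset_Ioi_self)
  · have hmu := hm (t - u) ⟨sub_nonneg.2 hu.2.le, by linarith [hu.1]⟩
    exact (ContinuousLinearMap.opNorm_comp_le _ _).trans
      (mul_le_mul hmu (hgw u ⟨hu.1, hu.2.le⟩) (norm_nonneg _) ((norm_nonneg _).trans hmu))

end Convolution

namespace IsPerturbation

variable {R S : C0Semigroup V} {g : ℝ → V →L[ℂ] V}

lemma continuousOn (hR : IsPerturbation R S g) (hS : S.IsImmediatelyDifferentiable) :
    ContinuousOn g (Ioi 0) :=
  hS.continuousOn_of_map_add fun _ hu _ hv => hR.map_add hS hu hv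

variable {t m : ℝ} {w : ℝ → ℝ} (hR : IsPerturbation R S g) (hS : S.IsImmediatelyDifferentiable)
  (hw : IntervalIntegrable w volume 0 t) (hgw : ∀ u ∈ Ioc 0 t, ‖g u‖ ≤ w u)

include hR hS hw hgw

lemma sub_apply_eq_integral (ht : 0 ≤ t) (x : V) :
    R.T t x - S.T t x = ∫ u in 0..t, R.T (t - u) (g u x) := by
  have hderiv : ∀ u ∈ Ioo 0 t,
      HasDerivAt (fun v => R.T (t - v) (S.T v x)) (-R.T (t - u) (g u x)) u := fun u hu => by
    obtain ⟨y, hy⟩ := hS u hu.1 x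
    simpa using R.hasDerivAt_sub_apply hu.2 (hS.hasDerivAt_apply hu.1 hy) (hR hu.1 hy)
  have hcont : ContinuousOn (fun v => R.T (t - v) (S.T v x)) (Icc 0 t) :=
    R.continuousOn_apply.comp (f := fun v => (t - v, S.T v x))
      ((continuousOn_const.sub continuousOn_id).prodMk
        ((S.strong_continuous x).mono Icc_subset_Ici_self))
      fun v hv => ⟨sub_nonneg.2 hv.2, mem_univ _⟩
  have hint := intervalIntegral.integral_eq_sub_of_hasDerivAt_of_le ht hcont hderiv
    (intervalIntegrable_sub_apply ht (hR.continuousOn hS) hw hgw R x).neg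
  rw [intervalIntegral.integral_neg] at hint
  simpa [R.map_zero', S.map_zero'] using congrArg Neg.neg hint.symm

lemma norm_sub_le (hm : ∀ s ∈ Icc 0 t, ‖R.T s‖ ≤ m) {s : ℝ} (hs : s ∈ Icc 0 t) :
    ‖R.T s - S.T s‖ ≤ m * ∫ u in 0..t, w u := by
  obtain ⟨hs0, hst⟩ := hs
  have hm0 : 0 ≤ m := (norm_nonneg _).trans (hm s ⟨hs0, hst⟩)
  have hw0 : ∀ u ∈ Ioc 0 t, 0 ≤ w u := fun u hu => (norm_nonneg _).trans (hgw u hu)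
  have hmono : ∫ u in 0..s, w u ≤ ∫ u in 0..t, w u :=
    intervalIntegral.integral_mono_interval le_rfl hs0 hst
      (ae_restrict_of_forall_mem measurableSet_Ioc hw0) hw
  have hwt0 : 0 ≤ ∫ u in 0..t, w u := (norm_nonneg _).trans
    (intervalIntegral.norm_integral_le_of_norm_le (hs0.trans hst) (.of_forall hgw) hw)
  have hws : IntervalIntegrable w volume 0 s := hw.mono_set (by grind [uIcc_of_le])
  have hgws : ∀ u ∈ Ioc 0 s, ‖g u‖ ≤ w u := fun u hu => hgw u ⟨hu.1, hu.2.trans hst⟩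
  refine ContinuousLinearMap.opNorm_le_bound _ (mul_nonneg hm0 hwt0) fun x => ?_
  rw [sub_apply, hR.sub_apply_eq_integral hS hws hgws hs0]
  refine (norm_integral_sub_apply_le hs0 (fun r hr => hm r ⟨hr.1, hr.2.trans hst⟩) hws hgws
    x).trans ?_
  gcongr

lemma norm_le_two_mul (hm : ∀ s ∈ Icc 0 t, ‖S.T s‖ ≤ m) (hsmall : ∫ u in 0..t, w u ≤ 1 / 2) :
    ∀ s ∈ Icc 0 t, ‖R.T s‖ ≤ 2 * m := by
  intro s hs
  have : Nonempty (Icc 0 t) := ⟨⟨s, hs⟩⟩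
  obtain ⟨C, hC⟩ := R.exists_norm_le t
  -- The supremum `K` of `‖R s‖` over `[0, t]` satisfies `K ≤ m + K / 2`, so it absorbs itself.
  set K := ⨆ s : Icc 0 t, ‖R.T s‖
  have hK : ∀ s ∈ Icc 0 t, ‖R.T s‖ ≤ K := fun s hs =>
    le_ciSup (f := fun s : Icc 0 t => ‖R.T s‖) ⟨C, forall_mem_range.2 fun s => hC s s.2⟩ ⟨s, hs⟩
  have hK0 : 0 ≤ K := (norm_nonneg _).trans (hK s hs)
  have hself : K ≤ m + K * (1 / 2) := ciSup_le fun s => calc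
    ‖R.T s‖ ≤ ‖S.T s‖ + ‖R.T s - S.T s‖ := norm_le_norm_add_norm_sub' _ _
    _ ≤ m + K * ∫ u in 0..t, w u := add_le_add (hm s s.2) (hR.norm_sub_le hS hw hgw hK s.2)
    _ ≤ m + K * (1 / 2) := by gcongr
  linarith [hK s hs]

lemma norm_sub_sub_integral_le (ht : 0 ≤ t) (hm : ∀ s ∈ Icc 0 t, ‖R.T s‖ ≤ m) :
    ‖R.T t - S.T t - ∫ u in 0..t, (S.T (t - u)).comp (g u)‖ ≤ m * (∫ u in 0..t, w u) ^ 2 := by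
  have hg := hR.continuousOn hS
  have hm0 : 0 ≤ m := (norm_nonneg _).trans (hm t ⟨ht, le_rfl⟩)
  have hexp : ∀ x, (R.T t - S.T t - ∫ u in 0..t, (S.T (t - u)).comp (g u)) x
      = ∫ u in 0..t, (R.T (t - u) - S.T (t - u)) (g u x) := fun x => by
    have hSint := hS.intervalIntegrable_sub_comp ht hg hw hgw
    simp only [sub_apply]
    rw [hR.sub_apply_eq_integral hS hw hgw ht, intervalIntegral.integral_sub
      (intervalIntegrable_sub_apply ht hg hw hgw R x)
      (intervalIntegrable_sub_apply ht hg hw hgw S x),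
      ContinuousLinearMap.intervalIntegral_apply hSint]
    rfl
  refine ContinuousLinearMap.opNorm_le_bound _ (by positivity) fun x => ?_
  rw [hexp, sq, ← mul_assoc]
  exact norm_integral_sub_apply_le (A := fun s => R.T s - S.T s) ht
    (fun s hs => hR.norm_sub_le hS hw hgw hm hs) hw hgw x

end IsPerturbation

lemma IsImmediatelyDifferentiable.hasDerivAt_integral_sub_comp {S : C0Semigroup V}
    (hS : S.IsImmediatelyDifferentiable) {I : Set ℝ} (hI : I ∈ 𝓝 0) {G : ℝ → ℝ → V →L[ℂ] V}
    (hG : ∀ r ∈ I, ContinuousOn (G r) (Ioi 0)) {t : ℝ} (ht : 0 ≤ t) {w : ℝ → ℝ}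
    (hw : IntervalIntegrable w volume 0 t)
    (hGw : ∀ r ∈ I, ∀ u ∈ Ioc 0 t, ‖G r u‖ ≤ |r| * w u) {g' : ℝ → V →L[ℂ] V}
    (hg' : ∀ u ∈ Ioc 0 t, HasDerivAt (G · u) (g' u) 0) :
    HasDerivAt (fun r => ∫ u in 0..t, (S.T (t - u)).comp (G r u))
      (∫ u in 0..t, (S.T (t - u)).comp (g' u)) 0 := by
  obtain ⟨M, hM⟩ := S.exists_norm_le t
  have hM' : ∀ u ∈ Ioc 0 t, ‖S.T (t - u)‖ ≤ M := fun u hu =>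
    hM _ ⟨sub_nonneg.2 hu.2, by linarith [hu.1]⟩
  have hG0 : ∀ u ∈ Ioc 0 t, G 0 u = 0 := fun u hu => by
    simpa using hGw 0 (mem_of_mem_nhds hI) u hu
  refine hasDerivAt_intervalIntegral_of_norm_sub_le hI
    (fun r hr => hS.intervalIntegrable_sub_comp ht (hG r hr) (hw.const_mul |r|) (hGw r hr))
    ?_ (hw.const_mul M) ?_ <;> rw [uIoc_of_le ht] <;> intro u hu
  · intro r hr
    rw [hG0 u hu, ContinuousLinearMap.comp_zero, sub_zero, sub_zero]
    calc ‖(S.T (t - u)).comp (G r u)‖ ≤ ‖S.T (t - u)‖ * ‖G r u‖ :=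
          ContinuousLinearMap.opNorm_comp_le _ _
      _ ≤ M * (|r| * w u) := mul_le_mul (hM' u hu) (hGw r hr u hu) (norm_nonneg _)
          ((norm_nonneg _).trans (hM' u hu))
      _ = M * w u * |r| := by ring
  · exact ((ContinuousLinearMap.compL ℂ V V V (S.T (t - u))).restrictScalars
      ℝ).hasFDerivAt.comp_hasDerivAt 0 (hg' u hu)

theorem hasDerivAt_T_of_isPerturbation {S : C0Semigroup V} (hS : S.IsImmediatelyDifferentiable)
    {I : Set ℝ} (hI : I ∈ 𝓝 0) {R : ℝ → C0Semigroup V} {G : ℝ → ℝ → V →L[ℂ] V}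
    (hR : ∀ r ∈ I, IsPerturbation (R r) S (G r)) {t : ℝ} (ht : 0 ≤ t) {w : ℝ → ℝ}
    (hw : IntervalIntegrable w volume 0 t)
    (hGw : ∀ r ∈ I, ∀ u ∈ Ioc 0 t, ‖G r u‖ ≤ |r| * w u) {g' : ℝ → V →L[ℂ] V}
    (hg' : ∀ u ∈ Ioc 0 t, HasDerivAt (G · u) (g' u) 0) :
    HasDerivAt (fun r => (R r).T t) (∫ u in 0..t, (S.T (t - u)).comp (g' u)) 0 := by
  obtain ⟨M, hM⟩ := S.exists_norm_le t
  have hfirst : HasDerivAt (fun r => ∫ u in 0..t, (S.T (t - u)).comp (G r u))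
      (∫ u in 0..t, (S.T (t - u)).comp (g' u)) 0 :=
    hS.hasDerivAt_integral_sub_comp hI (fun r hr => (hR r hr).continuousOn hS) ht hw hGw hg'
  set remainder := fun r : ℝ => (R r).T t - S.T t - ∫ u in 0..t, (S.T (t - u)).comp (G r u)
  have hsmall : ∀ᶠ r : ℝ in 𝓝 0, |r| * ∫ u in 0..t, w u ≤ 1 / 2 := by
    have : ContinuousAt (fun r : ℝ => |r| * ∫ u in 0..t, w u) 0 := by fun_prop
    exact this.eventually_le_const (by simp)
  have hO : remainder =O[𝓝 0] fun r => ‖r - 0‖ ^ 2 := by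
    refine .of_bound (2 * M * (∫ u in 0..t, w u) ^ 2) ?_
    filter_upwards [hI, hsmall] with r hr hrw
    rw [← intervalIntegral.integral_const_mul] at hrw
    have hr2 := (hR r hr).norm_sub_sub_integral_le hS (hw.const_mul |r|) (hGw r hr) ht
      ((hR r hr).norm_le_two_mul hS (hw.const_mul |r|) (hGw r hr) hM hrw)
    rw [intervalIntegral.integral_const_mul] at hr2
    refine hr2.trans_eq ?_
    rw [sub_zero, norm_pow, norm_norm, Real.norm_eq_abs]
    ring
  have hremainder : HasDerivAt remainder 0 0 := (hO.hasFDerivAt one_lt_two).hasDerivAt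
  simpa [remainder] using! (hremainder.add hfirst).add_const (S.T t)

end C0Semigroup

open C0Semigroup in
theorem stmt7_general {V : Type*} [NormedAddCommGroup V] [NormedSpace ℂ V] [CompleteSpace V]
    {S : C0Semigroup V} {dom : Set V} {Z : V → V} (hgen : HasGenerator S dom Z)
    (hS : S.IsImmediatelyDifferentiable) {I : Set ℝ} (hI : I ∈ 𝓝 0) {B : ℝ → V → V}
    (hB0 : ∀ x, B 0 x = 0) {G : ℝ → ℝ → V →L[ℂ] V}
    (hG : ∀ r ∈ I, ∀ t > 0, ∀ x, G r t x = B r (S.T t x))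
    {DB : ℝ → V →L[ℂ] V} (hDB : ∀ t > 0, HasDerivAt (fun r => G r t) (DB t) 0)
    {w : ℝ → ℝ} (hw : IntervalIntegrable w volume 0 1)
    (hest : ∀ r ∈ I, r ≠ 0 → ∀ t ∈ Ioo 0 1, ‖G r t‖ ≤ |r| * w t)
    {SB : ℝ → C0Semigroup V}
    (hSB : ∀ r ∈ I, HasGenerator (SB r) dom (fun x => Z x + B r x)) {t : ℝ} (ht : 0 ≤ t) :
    IntervalIntegrable (fun s => (S.T s).comp (DB (t - s))) volume 0 t ∧
      HasDerivAt (fun r => (SB r).T t) (∫ s in 0..t, (S.T s).comp (DB (t - s))) 0 := by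
  obtain ⟨M, hM⟩ := S.exists_norm_le t
  have hGw : ∀ r ∈ I, ∀ u ∈ Ioo 0 1, ‖G r u‖ ≤ |r| * w u := fun r hr u hu => by
    rcases eq_or_ne r 0 with rfl | hr0
    · have hG0 : G 0 u = 0 := ContinuousLinearMap.ext fun x => by
        rw [hG 0 hr u hu.1, hB0, zero_apply]
      simp [hG0]
    · exact hest r hr hr0 u hu
  set W : ℝ → ℝ := fun u => w ((1 + t)⁻¹ * u) * M
  have hW : IntervalIntegrable W volume 0 t :=
    (intervalIntegrable_comp_inv_one_add_mul hw ht).mul_const M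
  have hR : ∀ r ∈ I, IsPerturbation (SB r) S (G r) := fun r hr =>
    isPerturbation_of_hasGenerator hgen (hSB r hr) (hG r hr)
  have hGadd : ∀ r ∈ I, ∀ u > 0, ∀ v ≥ 0, G r (u + v) = (G r u).comp (S.T v) :=
    fun r hr u hu v hv => (hR r hr).map_add hS hu hv
  have hGW : ∀ r ∈ I, ∀ u ∈ Ioc 0 t, ‖G r u‖ ≤ |r| * W u := fun r hr u hu =>
    (norm_le_mul_of_map_add (w := fun u => |r| * w u) (hGadd r hr) hM (hGw r hr) hu).trans_eq
      (mul_assoc _ _ _)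
  have hDBW : ∀ u ∈ Ioc 0 t, ‖DB u‖ ≤ W u := fun u hu =>
    norm_le_of_hasDerivAt hI (hDB u hu.1) fun r hr => hGW r hr u hu
  have hDBcont : ContinuousOn DB (Ioi 0) :=
    hS.continuousOn_of_map_add fun u hu v hv => map_add_of_hasDerivAt hI hDB hGadd hu hv
  have hint := (hS.intervalIntegrable_sub_comp ht hDBcont hW hDBW).comp_sub_left t
  have hsub := intervalIntegral.integral_comp_sub_left (a := 0) (b := t)
    (fun u => (S.T (t - u)).comp (DB u)) t
  simp only [sub_sub_cancel, sub_zero, sub_self] at hint hsub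
  refine ⟨hint.symm, ?_⟩
  rw [hsub]
  exact hasDerivAt_T_of_isPerturbation hS hI hR ht hW hGW fun u hu => hDB u hu.1

/-- **Duhamel's formula.** Let `Z` generate a holomorphic semigroup and let
`(B(r))_{r ∈ [−ε,ε]}` be a family of closed operators with `B(0) = 0` such that
`B(r) e^{tZ}` (represented by the bounded operators `G r t`) is bounded, continuous in `r`,
differentiable at `r = 0` with derivative `DB t`, and `‖r⁻¹ B(r) e^{tZ}‖ ≤ C t^{−1/2}` for
small `t`; assume the set of `f ∈ dom Z` with `B(r) e^{tZ} f ∈ dom Z` for all `t ≥ 0`,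
`r ∈ [−ε,ε]` is dense. If `e^{t(Z+B(r))}` denotes the holomorphic semigroup generated by
`Z + B(r)`, then `(d/dr) e^{t(Z+B(r))}|_{r=0} = ∫₀ᵗ e^{sZ} (d/dr)(B(r)e^{(t−s)Z})|_{r=0} ds`
in operator norm. -/
theorem stmt7 {V : Type*} [NormedAddCommGroup V] [NormedSpace ℂ V] [CompleteSpace V]
    (S : C0Semigroup V) (dom : Set V) (Z : V → V)
    (hgen : HasGenerator S dom Z)
    (hhol : IsHolomorphicSemigroup S)
    (ε : ℝ) (hε : 0 < ε)
    (domB : ℝ → Set V) (B : ℝ → V → V)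
    (hBadd : ∀ r ∈ Set.Icc (-ε) ε, ∀ x ∈ domB r, ∀ y ∈ domB r,
      x + y ∈ domB r ∧ B r (x + y) = B r x + B r y)
    (hBsmul : ∀ r ∈ Set.Icc (-ε) ε, ∀ (c : ℂ), ∀ x ∈ domB r,
      c • x ∈ domB r ∧ B r (c • x) = c • B r x)
    (hBclosed : ∀ r ∈ Set.Icc (-ε) ε, IsClosed {p : V × V | p.1 ∈ domB r ∧ p.2 = B r p.1})
    (hB0 : ∀ x : V, x ∈ domB 0 ∧ B 0 x = 0)
    (G : ℝ → ℝ → V →L[ℂ] V)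
    (hG : ∀ r ∈ Set.Icc (-ε) ε, ∀ t : ℝ, 0 < t →
      ∀ x : V, S.T t x ∈ domB r ∧ G r t x = B r (S.T t x))
    (hGcont : ∀ t : ℝ, 0 < t → ContinuousOn (fun r => G r t) (Set.Icc (-ε) ε))
    (DB : ℝ → V →L[ℂ] V)
    (hDB : ∀ t : ℝ, 0 < t → HasDerivWithinAt (fun r => G r t) (DB t) (Set.Icc (-ε) ε) 0)
    (hest : ∃ C : ℝ, 0 < C ∧ ∀ r ∈ Set.Icc (-ε) ε, r ≠ 0 → ∀ t : ℝ, 0 < t → t < 1 →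
      ‖G r t‖ ≤ C * |r| / Real.sqrt t)
    (hdense : Dense {f : V | f ∈ dom ∧ ∀ t : ℝ, 0 ≤ t → ∀ r ∈ Set.Icc (-ε) ε,
      S.T t f ∈ domB r ∧ B r (S.T t f) ∈ dom})
    (SB : ℝ → C0Semigroup V)
    (hSB : ∀ r ∈ Set.Icc (-ε) ε, IsHolomorphicSemigroup (SB r) ∧
      HasGenerator (SB r) dom (fun x => Z x + B r x)) :
    ∀ t : ℝ, 0 ≤ t →
      HasDerivWithinAt (fun r => (SB r).T t)
        (∫ s in (0 : ℝ)..t, (S.T s).comp (DB (t - s))) (Set.Icc (-ε) ε) 0 := by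
  intro t ht
  obtain ⟨C, -, hC⟩ := hest
  exact (stmt7_general hgen hhol.isImmediatelyDifferentiable (Icc_mem_nhds (by simpa) hε)
    (fun x => (hB0 x).2) (fun r hr u hu x => (hG r hr u hu x).2)
    (fun u hu => (hDB u hu).hasDerivAt (Icc_mem_nhds (by simpa) hε))
    (intervalIntegrable_div_sqrt C zero_le_one)
    (fun r hr hr0 u hu => (hC r hr hr0 u hu.1 hu.2).trans_eq (by ring))
    (fun r hr => (hSB r hr).2) ht).2.hasDerivWithinAt
end
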